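/- Downward Löwenheim–Skolem Theorem (one-step compact case): Over any one-step compact Λ-structure (with all operators unary), CPL(Λ,Σ) satisfies the downward Löwenheim–Skolem theorem: every coalgebraic model of infinite cardinality κ has, for every infinite cardinal λ ≤ κ (with λ at least the cardinality of the language), an elementary substructure of cardinality λ. -/

import Mathlib

namespace CPL

/-- A Λ-structure: a `Set`-endofunctor `T` together with a natural predicate lifting
for every modal operator. -/
structure LambdaStructure (Λ : Type) (ar : Λ → ℕ) : Type 1 where
  T : Type → Type
  map : {C D : Type} → (C → D) → T C → T D
  lift : (ℓ : Λ) → (C : Type) → (Fin (ar ℓ) → Set C) → Set (T C)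
  natural : ∀ {C D : Type} (f : C → D) (ℓ : Λ) (A : Fin (ar ℓ) → Set D) (t : T C),
      map f t ∈ lift ℓ D A ↔ t ∈ lift ℓ C fun i => f ⁻¹' A i

/-- Formulas of coalgebraic predicate logic `CPL(Λ,Σ)`. -/
inductive Formula (Λ : Type) (ar : Λ → ℕ) (Sig : Type) (arP : Sig → ℕ) (V : Type) : Type
  | eq : V → V → Formula Λ ar Sig arP V
  | pred : (P : Sig) → (Fin (arP P) → V) → Formula Λ ar Sig arP V
  | bot : Formula Λ ar Sig arP V
  | imp : Formula Λ ar Sig arP V → Formula Λ ar Sig arP V → Formula Λ ar Sig arP V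
  | all : V → Formula Λ ar Sig arP V → Formula Λ ar Sig arP V
  | heart : V → (ℓ : Λ) → (Fin (ar ℓ) → V) → (Fin (ar ℓ) → Formula Λ ar Sig arP V) →
      Formula Λ ar Sig arP V

variable {Λ : Type} {ar : Λ → ℕ} {Sig : Type} {arP : Sig → ℕ} {V : Type}

def Formula.notF (φ : Formula Λ ar Sig arP V) : Formula Λ ar Sig arP V := φ.imp .bot

def Formula.orF (φ ψ : Formula Λ ar Sig arP V) : Formula Λ ar Sig arP V := (φ.imp .bot).imp ψ

def Formula.andF (φ ψ : Formula Λ ar Sig arP V) : Formula Λ ar Sig arP V := (φ.imp ψ.notF).notF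

def Formula.iffF (φ ψ : Formula Λ ar Sig arP V) : Formula Λ ar Sig arP V :=
  (φ.imp ψ).andF (ψ.imp φ)

def Formula.exF (x : V) (φ : Formula Λ ar Sig arP V) : Formula Λ ar Sig arP V :=
  (Formula.all x φ.notF).notF

def bigOr (l : List (Formula Λ ar Sig arP V)) : Formula Λ ar Sig arP V :=
  l.foldr Formula.orF .bot

def bigAnd (l : List (Formula Λ ar Sig arP V)) : Formula Λ ar Sig arP V :=
  l.foldr Formula.andF (Formula.bot.notF)

def allList (ys : List V) (φ : Formula Λ ar Sig arP V) : Formula Λ ar Sig arP V :=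
  ys.foldr Formula.all φ

def exList (ys : List V) (φ : Formula Λ ar Sig arP V) : Formula Λ ar Sig arP V :=
  ys.foldr Formula.exF φ

/-- Free variables of a CPL formula. -/
def Formula.freeVars : Formula Λ ar Sig arP V → Set V
  | .eq a b => {a, b}
  | .pred _ xs => Set.range xs
  | .bot => ∅
  | .imp φ ψ => φ.freeVars ∪ ψ.freeVars
  | .all x φ => φ.freeVars \ {x}
  | .heart x _ ys φs => insert x (⋃ i, ((φs i).freeVars \ {ys i}))

variable [DecidableEq V]

/-- Substitution `φ[t/x]` of the variable `t` for the variable `x` (terms are variables). -/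
def Formula.subst : Formula Λ ar Sig arP V → V → V → Formula Λ ar Sig arP V
  | .eq a b, t, x => .eq (if a = x then t else a) (if b = x then t else b)
  | .pred P xs, t, x => .pred P fun i => if xs i = x then t else xs i
  | .bot, _, _ => .bot
  | .imp φ ψ, t, x => .imp (φ.subst t x) (ψ.subst t x)
  | .all y φ, t, x => if y = x then .all y φ else .all y (φ.subst t x)
  | .heart z ℓ ys φs, t, x =>
      .heart (if z = x then t else z) ℓ ys fun i => if ys i = x then φs i else (φs i).subst t x

/-- Substitutability of the variable `t` for the variable `x` (Enderton-style). -/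
def Formula.Substitutable (t x : V) : Formula Λ ar Sig arP V → Prop
  | .eq _ _ => True
  | .pred _ _ => True
  | .bot => True
  | .imp φ ψ => φ.Substitutable t x ∧ ψ.Substitutable t x
  | .all y φ => t ∉ (Formula.all y φ).freeVars ∨ (t ≠ y ∧ φ.Substitutable t x)
  | .heart _ _ ys φs =>
      ∀ i, t ∉ ((φs i).freeVars \ {ys i}) ∨ (t ≠ ys i ∧ (φs i).Substitutable t x)

/-- Satisfaction in a coalgebraic model (given by a coalgebra `γ` and an
interpretation `I` of the predicate symbols). -/
def Sat (S : LambdaStructure Λ ar) {C : Type} (γ : C → S.T C)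
    (I : (P : Sig) → (Fin (arP P) → C) → Prop) :
    (V → C) → Formula Λ ar Sig arP V → Prop
  | v, .eq a b => v a = v b
  | v, .pred P xs => I P fun i => v (xs i)
  | _, .bot => False
  | v, .imp φ ψ => Sat S γ I v φ → Sat S γ I v ψ
  | v, .all x φ => ∀ c : C, Sat S γ I (Function.update v x c) φ
  | v, .heart x ℓ ys φs =>
      γ (v x) ∈ S.lift ℓ C fun i => {c : C | Sat S γ I (Function.update v (ys i) c) (φs i)}


/-- Boolean (propositional) formulas over a set `α` of atoms. -/
inductive PropForm (α : Type) : Type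
  | var : α → PropForm α
  | bot : PropForm α
  | imp : PropForm α → PropForm α → PropForm α

namespace PropForm

def neg {α : Type} (A : PropForm α) : PropForm α := A.imp .bot

def orP {α : Type} (A B : PropForm α) : PropForm α := (A.imp .bot).imp B

def vars {α : Type} : PropForm α → Set α
  | .var a => {a}
  | .bot => ∅
  | .imp A B => A.vars ∪ B.vars

def bind {α β : Type} (f : α → PropForm β) : PropForm α → PropForm β
  | .var a => f a
  | .bot => .bot
  | .imp A B => .imp (A.bind f) (B.bind f)

end PropForm

/-- Evaluation of Boolean formulas in the Boolean algebra `𝒫 C`. -/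
def pEval {α C : Type} (f : α → Set C) : PropForm α → Set C
  | .var a => f a
  | .bot => ∅
  | .imp A B => (pEval f A)ᶜ ∪ pEval f B

/-- Evaluation of Boolean formulas under a valuation of atoms by propositions. -/
def pHolds {α : Type} (w : α → Prop) : PropForm α → Prop
  | .var a => w a
  | .bot => False
  | .imp A B => pHolds w A → pHolds w B

/-- A modal literal `♥ p₁ … pₙ` over schematic variables. -/
abbrev ModalLit (Λ : Type) (ar : Λ → ℕ) (sVar : Type) : Type := (ℓ : Λ) × (Fin (ar ℓ) → sVar)

/-- A one-step rule `A / P`, with `P` represented as a list of signed modal literals. -/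
structure OneStepRule (Λ : Type) (ar : Λ → ℕ) (sVar : Type) : Type where
  prem : PropForm sVar
  lits : List (Bool × ModalLit Λ ar sVar)

variable {Λ : Type} {ar : Λ → ℕ} {sVar : Type}

/-- Well-formedness of one-step rules: every schematic variable occurs at most once in the
conclusion, and every schematic variable of the premise occurs in the conclusion. -/
def OneStepRule.WF (R : OneStepRule Λ ar sVar) : Prop :=
  ((R.lits.map fun l => List.ofFn l.2.2).flatten).Nodup ∧
    R.prem.vars ⊆ {p | ∃ l ∈ R.lits, ∃ j, l.2.2 j = p}

def litSet (S : LambdaStructure Λ ar) (C : Type) (τ : sVar → Set C)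
    (l : Bool × ModalLit Λ ar sVar) : Set (S.T C) :=
  if l.1 then S.lift l.2.1 C (fun j => τ (l.2.2 j)) else (S.lift l.2.1 C (fun j => τ (l.2.2 j)))ᶜ

/-- One-step soundness of a one-step rule. -/
def OneStepSound (S : LambdaStructure Λ ar) (R : OneStepRule Λ ar sVar) : Prop :=
  ∀ (C : Type) (τ : sVar → Set C), pEval τ R.prem = Set.univ →
    (⋃ l ∈ R.lits, litSet S C τ l) = Set.univ

/-- `♥` is `k`-bounded in its `i`-th argument. -/
def BoundedAt (S : LambdaStructure Λ ar) (ℓ : Λ) (i : Fin (ar ℓ)) (k : ℕ) : Prop :=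
  ∀ (C : Type) (A : Fin (ar ℓ) → Set C) (t : S.T C),
    t ∈ S.lift ℓ C A ↔
      ∃ B : Set C, B ⊆ A i ∧ B.Finite ∧ B.ncard ≤ k ∧ t ∈ S.lift ℓ C (Function.update A i B)



section OneStepCompactness

/-- Satisfaction of a one-step formula (a Boolean combination of expressions `♥A`, `A ⊆ X`)
by an element `t ∈ TX` (unary operators). -/
def osSat (S : LambdaStructure Λ ar) (X : Type) (t : S.T X) (A : PropForm (Λ × Set X)) :
    Prop :=
  t ∈ pEval (fun l => S.lift l.1 X fun _ => l.2) A

/-- A `Λ`-structure is one-step compact: every finitely satisfiable set of one-step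
formulas over any set `X` is satisfiable. -/
def OneStepCompact (S : LambdaStructure Λ ar) : Prop :=
  ∀ (X : Type) (Φ : Set (PropForm (Λ × Set X))),
    (∀ Φ₀ ⊆ Φ, Φ₀.Finite → ∃ t : S.T X, ∀ A ∈ Φ₀, osSat S X t A) →
    ∃ t : S.T X, ∀ A ∈ Φ, osSat S X t A

/-- Satisfaction of a finitary one-step formula (atoms `♥B` with `B ⊆ X` finite). -/
def osSatFin (S : LambdaStructure Λ ar) (X : Type) (t : S.T X)
    (A : PropForm (Λ × Finset X)) : Prop :=
  t ∈ pEval (fun l => S.lift l.1 X fun _ => (l.2 : Set X)) A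

/-- A `Λ`-structure is finitary one-step compact: every finitely satisfiable set of
one-step formulas over finite subsets of any set `X` is satisfiable. -/
def FinitaryOneStepCompact (S : LambdaStructure Λ ar) : Prop :=
  ∀ (X : Type) (Φ : Set (PropForm (Λ × Finset X))),
    (∀ Φ₀ ⊆ Φ, Φ₀.Finite → ∃ t : S.T X, ∀ A ∈ Φ₀, osSatFin S X t A) →
    ∃ t : S.T X, ∀ A ∈ Φ, osSatFin S X t A

end OneStepCompactness

section Helpers

variable {Sig : Type} {arP : Sig → ℕ} {V : Type}

theorem freeVars_finite (φ : Formula Λ ar Sig arP V) : φ.freeVars.Finite := by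
  induction φ with
  | eq a b => simp [Formula.freeVars]
  | pred P xs => exact Set.finite_range xs
  | bot => simp [Formula.freeVars]
  | imp φ ψ h1 h2 => exact h1.union h2
  | all x φ h => exact h.sdiff
  | heart x ℓ ys φs h =>
    exact (Set.finite_iUnion fun i => (h i).sdiff).insert x

variable [DecidableEq V]

theorem sat_congr (S : LambdaStructure Λ ar) {C : Type} (γ : C → S.T C)
    (I : (P : Sig) → (Fin (arP P) → C) → Prop) (φ : Formula Λ ar Sig arP V) :
    ∀ v w : V → C, (∀ x ∈ φ.freeVars, v x = w x) → (Sat S γ I v φ ↔ Sat S γ I w φ) := by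
  induction φ with
  | eq a b => intro v w h; simp [Formula.freeVars] at h; simp [Sat, h]
  | pred P xs =>
    intro v w h
    have : (fun i => v (xs i)) = fun i => w (xs i) := funext fun i => h _ ⟨i, rfl⟩
    simp only [Sat, this]
  | bot => intro v w h; simp [Sat]
  | imp φ ψ h1 h2 =>
    intro v w h
    simp only [Sat]
    rw [h1 v w fun x hx => h x (Or.inl hx), h2 v w fun x hx => h x (Or.inr hx)]
  | all x φ ih =>
    intro v w h
    simp only [Sat]
    refine forall_congr' fun c => ih _ _ fun y hy => ?_
    by_cases hxy : y = x
    · subst hxy; simp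
    · simp [hxy]; exact h y ⟨hy, hxy⟩
  | heart x ℓ ys φs ih =>
    intro v w h
    simp only [Sat]
    rw [h x (Set.mem_insert _ _)]
    have : (fun i => {c : C | Sat S γ I (Function.update v (ys i) c) (φs i)}) =
        fun i => {c : C | Sat S γ I (Function.update w (ys i) c) (φs i)} := by
      funext i
      ext c
      refine ih i _ _ fun y hy => ?_
      by_cases hxy : y = ys i
      · subst hxy; simp
      · simp [hxy]
        exact h y (Set.mem_insert_of_mem _ (Set.mem_iUnion.2 ⟨i, hy, hxy⟩))
    rw [this]

/-- The sets definable with parameters from `Y`. -/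
def DefSets (S : LambdaStructure Λ ar) {C : Type} (γ : C → S.T C)
    (I : (P : Sig) → (Fin (arP P) → C) → Prop) (V : Type) [DecidableEq V] (Y : Set C) :
    Set (Set C) :=
  {A | ∃ (φ : Formula Λ ar Sig arP V) (z : V) (v : V → C), (∀ x, v x ∈ Y) ∧
    A = {c | Sat S γ I (Function.update v z c) φ}}

theorem DefSets.compl {S : LambdaStructure Λ ar} {C : Type} {γ : C → S.T C}
    {I : (P : Sig) → (Fin (arP P) → C) → Prop} {Y : Set C} {A : Set C}
    (h : A ∈ DefSets S γ I V Y) : Aᶜ ∈ DefSets S γ I V Y := by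
  obtain ⟨φ, z, v, hv, rfl⟩ := h
  refine ⟨φ.notF, z, v, hv, ?_⟩
  ext c
  simp [Formula.notF, Sat]

theorem DefSets.mono {S : LambdaStructure Λ ar} {C : Type} {γ : C → S.T C}
    {I : (P : Sig) → (Fin (arP P) → C) → Prop} {Y Z : Set C} (h : Y ⊆ Z) :
    DefSets S γ I V Y ⊆ DefSets S γ I V Z := by
  rintro A ⟨φ, z, v, hv, rfl⟩
  exact ⟨φ, z, v, fun x => h (hv x), rfl⟩

theorem DefSets.iUnion {S : LambdaStructure Λ ar} {C : Type} {γ : C → S.T C}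
    {I : (P : Sig) → (Fin (arP P) → C) → Prop} {Y : ℕ → Set C} (hY : Monotone Y)
    (y0 : C) (hy0 : y0 ∈ Y 0) :
    DefSets S γ I V (⋃ n, Y n) ⊆ ⋃ n, DefSets S γ I V (Y n) := by
  classical
  rintro A ⟨φ, z, v, hv, rfl⟩
  have hfin := (freeVars_finite φ).image v
  have : ∃ n, v '' φ.freeVars ⊆ Y n := by
    refine hY.directed_le.exists_mem_subset_of_finset_subset_biUnion (s := hfin.toFinset) ?_ |>.imp
      fun n hn => ?_
    · rintro _ h
      simp only [Set.Finite.coe_toFinset] at h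
      obtain ⟨x, _, rfl⟩ := h
      exact hv x
    · simpa using hn
  obtain ⟨n, hn⟩ := this
  refine Set.mem_iUnion.2 ⟨n, φ, z, fun x => if x ∈ φ.freeVars then v x else y0, ?_, ?_⟩
  · intro x
    dsimp only
    split_ifs with hx
    · exact hn ⟨x, hx, rfl⟩
    · exact hY (Nat.zero_le n) hy0
  · ext c
    refine sat_congr S γ I φ _ _ fun x hx => ?_
    by_cases hxz : x = z
    · subst hxz; simp
    · simp [hxz, hx]

theorem DefSets.card {S : LambdaStructure Λ ar} {C : Type} {γ : C → S.T C}
    {I : (P : Sig) → (Fin (arP P) → C) → Prop} {Y : Set C} {lam : Cardinal}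
    (y0 : C)
    (hlam0 : Cardinal.aleph0 ≤ lam) (hY : Cardinal.mk Y ≤ lam)
    (hlang : Cardinal.mk (Formula Λ ar Sig arP V) ≤ lam) :
    Cardinal.mk (DefSets S γ I V Y) ≤ lam := by
  classical
  have hV : Cardinal.mk V ≤ lam := by
    refine le_trans ?_ hlang
    refine Cardinal.mk_le_of_injective (f := fun x => Formula.eq x x) ?_
    intro a b h
    injection h
  let F : (Σ φ : Formula Λ ar Sig arP V, V × (φ.freeVars → Y)) → Set C := fun p =>
    {c | Sat S γ I (Function.update
      (fun x => if h : x ∈ p.1.freeVars then ((p.2.2 ⟨x, h⟩ : Y) : C) else y0) p.2.1 c) p.1}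
  have hsub : DefSets S γ I V Y ⊆ Set.range F := by
    rintro A ⟨φ, z, v, hv, rfl⟩
    refine ⟨⟨φ, z, fun x => ⟨v x, hv x⟩⟩, ?_⟩
    ext c
    refine sat_congr S γ I φ _ _ fun x hx => ?_
    by_cases hxz : x = z
    · subst hxz; simp
    · simp [hxz, hx]
  refine (Cardinal.mk_le_mk_of_subset hsub).trans (Cardinal.mk_range_le.trans ?_)
  rw [Cardinal.mk_sigma]
  refine (Cardinal.sum_le_mk_mul_iSup _).trans ?_
  refine (mul_le_mul' hlang (ciSup_le' fun φ => ?_)).trans (Cardinal.mul_eq_self hlam0).le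
  · have := (freeVars_finite φ).to_subtype
    have := Fintype.ofFinite φ.freeVars
    rw [Cardinal.mk_prod, Cardinal.lift_id, Cardinal.lift_id]
    refine (mul_le_mul' hV ?_).trans (Cardinal.mul_eq_self hlam0).le
    rw [← Cardinal.power_def, Cardinal.mk_fintype φ.freeVars, Cardinal.power_natCast]
    exact (pow_le_pow_left' hY _).trans (Cardinal.power_nat_le hlam0)

/-- Existence of a suitably closed set of cardinality `lam`. -/
theorem exists_hull (S : LambdaStructure Λ ar) {C : Type} (γ : C → S.T C)
    (I : (P : Sig) → (Fin (arP P) → C) → Prop)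
    (lam : Cardinal) (hlam0 : Cardinal.aleph0 ≤ lam) (hlamC : lam ≤ Cardinal.mk C)
    (hlang : Cardinal.mk (Formula Λ ar Sig arP V) ≤ lam) :
    ∃ Y : Set C, Cardinal.mk Y = lam ∧
      ∀ F : Set (Set C), F.Finite → F ⊆ DefSets S γ I V Y → (⋂₀ F).Nonempty →
        ∃ y ∈ Y, y ∈ ⋂₀ F := by
  classical
  obtain ⟨Y0, hY0⟩ := Cardinal.le_mk_iff_exists_set.1 hlamC
  have hne : Y0.Nonempty := by
    rw [Set.nonempty_iff_ne_empty]
    rintro rfl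
    rw [Cardinal.mk_emptyCollection] at hY0
    rw [← hY0] at hlam0
    exact absurd hlam0 (not_le.2 Cardinal.aleph0_pos)
  obtain ⟨y0, hy0⟩ := hne
  let g : Set C → C := fun B => if h : B.Nonempty then h.some else y0
  have hg : ∀ B : Set C, B.Nonempty → g B ∈ B := by
    intro B hB
    simp only [g, dif_pos hB]
    exact hB.some_mem
  let step : Set C → Set C := fun Y =>
    Y ∪ Set.range (fun l : List (DefSets S γ I V Y) => g (⋂₀ {A | ∃ a ∈ l, a.1 = A}))
  let Yn : ℕ → Set C := fun n => step^[n] Y0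
  have hsucc : ∀ n, Yn (n + 1) = step (Yn n) := fun n => Function.iterate_succ_apply' step n Y0
  have hmono : Monotone Yn := monotone_nat_of_le_succ fun n => by
    rw [hsucc]; exact Set.subset_union_left
  have hcard : ∀ n, Cardinal.mk (Yn n) ≤ lam := by
    intro n
    induction n with
    | zero => exact hY0.le
    | succ n ih =>
      rw [hsucc]
      refine (Cardinal.mk_union_le _ _).trans ?_
      refine (add_le_add ih (Cardinal.mk_range_le.trans ((Cardinal.mk_list_le_max _).trans
        (max_le hlam0 (DefSets.card y0 hlam0 ih hlang))))).trans (Cardinal.add_eq_self hlam0).le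
  refine ⟨⋃ n, Yn n, le_antisymm ?_ ?_, ?_⟩
  · refine (Cardinal.mk_iUnion_le _).trans ?_
    refine (mul_le_mul' ?_ (ciSup_le' hcard)).trans (Cardinal.mul_eq_self hlam0).le
    simpa using hlam0
  · rw [← hY0]
    exact Cardinal.mk_le_mk_of_subset (Set.subset_iUnion Yn 0)
  · intro F hF hFsub hFne
    have hdir : Monotone fun n => DefSets S γ I V (Yn n) := fun a b h => DefSets.mono (hmono h)
    obtain ⟨n, hn⟩ := hdir.directed_le.exists_mem_subset_of_finset_subset_biUnion
      (s := hF.toFinset) (by simpa using hFsub.trans (DefSets.iUnion hmono y0 hy0))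
    simp only [Set.Finite.coe_toFinset] at hn
    refine ⟨g (⋂₀ F), Set.mem_iUnion.2 ⟨n + 1, ?_⟩, hg _ hFne⟩
    rw [hsucc]
    refine Or.inr ⟨hF.toFinset.toList.attach.map fun a => ⟨a.1, hn (by simpa using a.2)⟩, ?_⟩
    dsimp only
    congr 2
    ext A
    simp
    exact fun h => hn h

end Helpers

/-- **Downward Löwenheim–Skolem Theorem, one-step compact case** (Thm. 5.11): over any
one-step compact `Λ`-structure (with all operators unary), every coalgebraic model of
infinite cardinality `κ` has, for every infinite cardinal `λ ≤ κ` that is at least the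
cardinality of the language, an elementary substructure of cardinality `λ` (the coalgebra
structure on the substructure need not be a subcoalgebra). -/
theorem downward_lowenheim_skolem_onestep_compact [DecidableEq V]
    (S : LambdaStructure Λ ar)
    (hunary : ∀ ℓ : Λ, ar ℓ = 1)
    (hcompact : OneStepCompact S)
    (C : Type) (γ : C → S.T C) (I : (P : Sig) → (Fin (arP P) → C) → Prop)
    (hinf : Cardinal.aleph0 ≤ Cardinal.mk C)
    (lam : Cardinal) (hlam0 : Cardinal.aleph0 ≤ lam) (hlamC : lam ≤ Cardinal.mk C)
    (hlang : Cardinal.mk (Formula Λ ar Sig arP V) ≤ lam) :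
    ∃ (Y : Set C) (ζ : Y → S.T Y),
      Cardinal.mk Y = lam ∧
      ∀ (φ : Formula Λ ar Sig arP V) (v : V → Y),
        Sat S ζ (fun P cs => I P fun j => ((cs j : Y) : C)) v φ ↔
          Sat S γ I (fun x => ((v x : Y) : C)) φ := by
  classical
  obtain ⟨Y, hYcard, hY⟩ := exists_hull (V := V) S γ I lam hlam0 hlamC hlang
  have key : ∀ y : C, ∃ t : S.T Y, ∀ A ∈ DefSets S γ I V Y, ∀ ℓ : Λ,
      (t ∈ S.lift ℓ Y (fun _ => Subtype.val ⁻¹' A) ↔ γ y ∈ S.lift ℓ C (fun _ => A)) := by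
    intro y
    let lit : Λ × Set C → PropForm (Λ × Set Y) := fun p =>
      if γ y ∈ S.lift p.1 C (fun _ => p.2) then .var (p.1, Subtype.val ⁻¹' p.2)
      else (PropForm.var (p.1, Subtype.val ⁻¹' p.2)).neg
    have hlit : ∀ (t : S.T Y) (p : Λ × Set C), osSat S Y t (lit p) ↔
        (t ∈ S.lift p.1 Y (fun _ => Subtype.val ⁻¹' p.2) ↔
          γ y ∈ S.lift p.1 C (fun _ => p.2)) := by
      intro t p
      by_cases h : γ y ∈ S.lift p.1 C (fun _ => p.2)
      · simp [lit, h, osSat, pEval]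
      · simp [lit, h, osSat, pEval, PropForm.neg]
    obtain ⟨t, ht⟩ := hcompact Y (lit '' {p | p.2 ∈ DefSets S γ I V Y}) (by
      intro Φ₀ hΦ hfin
      obtain ⟨P, hP, hPfin, rfl⟩ := (Set.exists_subset_image_finite_and
        (p := fun s => s = Φ₀)).1 ⟨Φ₀, hΦ, hfin, rfl⟩
      have hf : ∀ c : C, ∃ d : Y, ∀ p ∈ P, (d.1 ∈ p.2 ↔ c ∈ p.2) := by
        intro c
        obtain ⟨d, hdY, hd⟩ := hY ((fun p : Λ × Set C => if c ∈ p.2 then p.2 else p.2ᶜ) '' P)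
          (hPfin.image _) (by
            rintro _ ⟨p, hp, rfl⟩
            dsimp only
            split_ifs
            · exact hP hp
            · exact DefSets.compl (hP hp)) ⟨c, by
            rintro _ ⟨p, hp, rfl⟩
            dsimp only
            split_ifs with h
            · exact h
            · exact h⟩
        refine ⟨⟨d, hdY⟩, fun p hp => ?_⟩
        have := hd _ ⟨p, hp, rfl⟩
        dsimp only at this
        split_ifs at this with h
        · exact ⟨fun _ => h, fun _ => this⟩
        · exact ⟨fun h' => absurd h' this, fun h' => absurd h' h⟩
      choose f hf using hf
      refine ⟨S.map f (γ y), ?_⟩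
      rintro _ ⟨p, hp, rfl⟩
      rw [hlit, S.natural]
      have : f ⁻¹' (Subtype.val ⁻¹' p.2) = p.2 := by
        ext c
        exact hf c p hp
      rw [this])
    refine ⟨t, fun A hA ℓ => (hlit t (ℓ, A)).1 (ht _ ⟨(ℓ, A), hA, rfl⟩)⟩
  choose ζ hζ using key
  refine ⟨Y, fun y => ζ y, hYcard, ?_⟩
  have hupd : ∀ (v : V → Y) (x : V) (c : Y),
      (fun z => ((Function.update v x c z : Y) : C)) =
        Function.update (fun z => ((v z : Y) : C)) x c := by
    intro v x c
    funext z
    by_cases h : z = x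
    · subst h; simp
    · simp [h]
  intro φ
  induction φ with
  | eq a b => intro v; simp [Sat, Subtype.ext_iff]
  | pred P xs => intro v; simp [Sat]
  | bot => intro v; simp [Sat]
  | imp φ ψ h1 h2 => intro v; simp only [Sat]; rw [h1, h2]
  | all x φ ih =>
    intro v
    simp only [Sat]
    constructor
    · intro h
      by_contra hcon
      push Not at hcon
      obtain ⟨c, hc⟩ := hcon
      obtain ⟨d, hdY, hd⟩ := hY {{c | Sat S γ I (Function.update (fun z => ((v z : Y) : C)) x c) φ}ᶜ}
        (Set.finite_singleton _)
        (Set.singleton_subset_iff.2 (DefSets.compl ⟨φ, x, _, fun z => (v z).2, rfl⟩))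
        ⟨c, by simpa using hc⟩
      have h1 := (ih _).1 (h ⟨d, hdY⟩)
      rw [hupd] at h1
      simp at hd
      exact hd h1
    · intro h c
      rw [ih, hupd]
      exact h c
  | heart x ℓ ys φs ih =>
    intro v
    simp only [Sat]
    have h01 : 0 < ar ℓ := by rw [hunary ℓ]; exact Nat.one_pos
    have hss : ∀ i : Fin (ar ℓ), i = ⟨0, h01⟩ := by
      intro i
      have := hunary ℓ
      ext
      have := i.2
      simp only
      omega
    let A : Set C := {c : C | Sat S γ I (Function.update (fun z => ((v z : Y) : C))
      (ys ⟨0, h01⟩) c) (φs ⟨0, h01⟩)}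
    have hA := hζ (v x) A ⟨φs ⟨0, h01⟩, ys ⟨0, h01⟩, _, fun z => (v z).2, rfl⟩ ℓ
    have e1 : (fun i => {c : C | Sat S γ I (Function.update (fun z => ((v z : Y) : C))
        (ys i) c) (φs i)}) = fun _ => A := by
      funext i
      rw [hss i]
    rw [e1, ← hA]
    refine iff_of_eq (congrArg (fun B => ζ (v x) ∈ S.lift ℓ Y B) ?_)
    funext i
    rw [hss i]
    ext c
    refine (ih _ _).trans ?_
    rw [hupd]
    rfl

end CPL
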